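/- For every non-negative integer k, every non-negative integer n, and every j ∈ {3, 4, 6}, the number of (7k+6)-colour partitions of 7n+j is divisible by 7; that is, p_{7k+6}(7n+j) ≡ 0 (mod 7). -/

import Mathlib

/-- `colouredPartitions r n` is the number of `r`-colour partitions of `n`:
multisets of pairs `(m, c)` with `m` a positive integer part and `c` one of `r`
colours, whose parts (first components, with multiplicity) sum to `n`.  Such a
multiset is encoded by its multiplicity function `f : ℕ+ × Fin r →₀ ℕ`. -/
noncomputable def colouredPartitions (r n : ℕ) : ℕ :=
  Nat.card {f : ℕ+ × Fin r →₀ ℕ // (f.sum fun x m => (x.1 : ℕ) * m) = n}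

open PowerSeries in
theorem cp_coeff_pow7 (Q : (ZMod 7)⟦X⟧) (n : ℕ) (h : ¬ 7 ∣ n) : coeff n (Q ^ 7) = 0 := by
  rcases n with _ | n
  · simp at h
  have h1 : d⁄dX (ZMod 7) (Q ^ 7) = 0 := by
    rw [Derivation.leibniz_pow, ← Nat.cast_smul_eq_nsmul (ZMod 7)]
    have : ((7 : ℕ) : ZMod 7) = 0 := by decide
    rw [this, zero_smul]
  have h2 := congrArg (coeff n) h1
  rw [coeff_derivative, map_zero] at h2
  have : Fact (Nat.Prime 7) := ⟨by norm_num⟩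
  rcases mul_eq_zero.mp h2 with h3 | h3
  · exact h3
  · exfalso
    apply h
    rw [← ZMod.natCast_eq_zero_iff]
    push_cast
    exact h3

theorem cp_pent_mod (k : ℤ) (m : ℕ) (hm : pentagonal k = m) :
    m % 7 = 0 ∨ m % 7 = 1 ∨ m % 7 = 2 ∨ m % 7 = 5 := by
  have h := two_mul_natCast_pentagonal k
  rw [hm] at h
  have h1 : (2 * (m : ZMod 7)) = (k : ZMod 7) * (3 * (k : ZMod 7) - 1) := by
    exact_mod_cast congrArg (Int.cast : ℤ → ZMod 7) h
  have key : ∀ a b : ZMod 7, 2 * a = b * (3 * b - 1) → a.val = 0 ∨ a.val = 1 ∨ a.val = 2 ∨ a.val = 5 := by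
    decide
  simpa [ZMod.val_natCast] using key _ _ h1

/-- number of weighted multisets -/
def CpSet {ι : Type} (w : ι → ℕ) (n : ℕ) : Type :=
  {f : ι →₀ ℕ // (f.sum fun x m => w x * m) = n}

theorem cp_equiv {ι κ : Type} (e : ι ≃ κ) (w : ι → ℕ) (v : κ → ℕ) (h : ∀ i, v (e i) = w i) (n : ℕ) :
    Nonempty (CpSet w n ≃ CpSet v n) := by
  refine ⟨(Finsupp.equivCongrLeft e).subtypeEquiv ?_⟩
  intro f
  simp [Finsupp.equivCongrLeft, Finsupp.equivMapDomain_eq_mapDomain,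
    Finsupp.sum_mapDomain_index, mul_add, h]

theorem cp_sum {ι κ : Type} (w : ι → ℕ) (v : κ → ℕ) (n : ℕ) :
    Nonempty (CpSet (Sum.elim w v) n ≃
      Σ p : Finset.HasAntidiagonal.antidiagonal n, CpSet w p.1.1 × CpSet v p.1.2) := by
  have key : ∀ f : ι →₀ ℕ, ∀ g : κ →₀ ℕ,
      ((Finsupp.sumElim f g).sum fun x m => Sum.elim w v x * m) =
      (f.sum fun x m => w x * m) + g.sum fun x m => v x * m := by
    intro f g
    rw [Finsupp.sumElim_eq_add, Finsupp.sum_add_index' (by simp) (by simp [mul_add])]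
    simp [Finsupp.sum_mapDomain_index, mul_add]
  have key2 : ∀ F : ι ⊕ κ →₀ ℕ, (F.sum fun x m => Sum.elim w v x * m) =
      ((Finsupp.sumFinsuppEquivProdFinsupp F).1.sum fun x m => w x * m) +
      ((Finsupp.sumFinsuppEquivProdFinsupp F).2.sum fun x m => v x * m) := by
    intro F
    rw [← key]
    congr 1
    exact (Finsupp.sumFinsuppEquivProdFinsupp.symm_apply_apply F).symm
  refine ⟨⟨fun F => ⟨⟨((Finsupp.sumFinsuppEquivProdFinsupp F.1).1.sum fun x m => w x * m,
    (Finsupp.sumFinsuppEquivProdFinsupp F.1).2.sum fun x m => v x * m), ?_⟩, ⟨(Finsupp.sumFinsuppEquivProdFinsupp F.1).1, rfl⟩,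
    ⟨(Finsupp.sumFinsuppEquivProdFinsupp F.1).2, rfl⟩⟩,
    fun p => ⟨Finsupp.sumElim p.2.1.1 p.2.2.1, ?_⟩, ?_, ?_⟩⟩
  · rw [Finset.HasAntidiagonal.mem_antidiagonal]
    exact (key2 F.1).symm.trans F.2
  · rw [key, p.2.1.2, p.2.2.2]
    exact Finset.HasAntidiagonal.mem_antidiagonal.mp p.1.2
  · intro F
    apply Subtype.ext
    exact Finsupp.sumFinsuppEquivProdFinsupp.symm_apply_apply F.1
  · rintro ⟨⟨⟨a, b⟩, hab⟩, ⟨f, hf⟩, ⟨g, hg⟩⟩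
    dsimp only at hf hg
    subst hf hg
    have h1 : (Finsupp.sumFinsuppEquivProdFinsupp (Finsupp.sumElim f g)) = (f, g) :=
      Finsupp.sumFinsuppEquivProdFinsupp.apply_symm_apply (f, g)
    have h2 : ∀ (z : (ι →₀ ℕ) × (κ →₀ ℕ)), z = (f, g) →
        ∀ hz : (z.1.sum fun x m => w x * m, z.2.sum fun x m => v x * m) ∈
          Finset.HasAntidiagonal.antidiagonal n,
        (⟨⟨(z.1.sum fun x m => w x * m, z.2.sum fun x m => v x * m), hz⟩,
          (⟨z.1, rfl⟩, ⟨z.2, rfl⟩)⟩ : Σ p : Finset.HasAntidiagonal.antidiagonal n,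
            CpSet w p.1.1 × CpSet v p.1.2) =
        ⟨⟨(f.sum fun x m => w x * m, g.sum fun x m => v x * m), hab⟩, (⟨f, rfl⟩, ⟨g, rfl⟩)⟩ := by
      intro z hz
      subst hz
      intro _
      rfl
    exact h2 _ h1 _

theorem cp_one (n : ℕ) : Nonempty (CpSet (fun x : ℕ+ => (x : ℕ)) n ≃ n.Partition) := by
  have key : ∀ f : ℕ+ →₀ ℕ, (Finsupp.toMultiset f |>.map (fun x : ℕ+ => (x : ℕ))).sum =
      f.sum fun x m => (x : ℕ) * m := by
    intro f
    induction f using Finsupp.induction_linear with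
    | zero => simp
    | add f g hf hg =>
      rw [map_add, Multiset.map_add, Multiset.sum_add, hf, hg,
        Finsupp.sum_add_index' (by simp) (by simp [mul_add])]
    | single a b => simp [mul_comm, Multiset.map_nsmul, Multiset.sum_nsmul]
  refine ⟨Equiv.ofBijective (fun f => ⟨Finsupp.toMultiset f.1 |>.map (fun x : ℕ+ => (x : ℕ)), ?_, ?_⟩) ⟨?_, ?_⟩⟩
  · intro i hi
    obtain ⟨x, -, rfl⟩ := Multiset.mem_map.mp hi
    exact x.pos
  · rw [key, f.2]
  · intro f g h
    have h1 := congrArg Nat.Partition.parts h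
    dsimp only at h1
    have h2 := Multiset.map_injective PNat.coe_injective h1
    exact Subtype.ext (Multiset.toFinsupp.symm.injective h2)
  · intro p
    obtain ⟨m, hm⟩ : ∃ m : Multiset ℕ+, m.map (fun x : ℕ+ => (x : ℕ)) = p.parts := by
      have h0 : ∀ x ∈ p.parts, 0 < x := fun x hx => p.parts_pos hx
      generalize p.parts = q at h0
      lift q to Multiset ℕ+ using h0
      exact ⟨q, rfl⟩
    have e : Finsupp.toMultiset (Multiset.toFinsupp m) = m := by simp
    refine ⟨⟨Multiset.toFinsupp m, ?_⟩, ?_⟩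
    · rw [← key, e, hm, p.parts_sum]
    · apply Nat.Partition.ext
      dsimp only
      rw [e, hm]

theorem cp_step (r n : ℕ) :
    Nonempty (CpSet (fun x : ℕ+ × Fin (r + 1) => (x.1 : ℕ)) n ≃
      Σ p : Finset.HasAntidiagonal.antidiagonal n, CpSet (fun x : ℕ+ × Fin r => (x.1 : ℕ)) p.1.1 ×
        CpSet (fun x : ℕ+ => (x : ℕ)) p.1.2) := by
  obtain ⟨a⟩ := cp_sum (fun x : ℕ+ × Fin r => (x.1 : ℕ)) (fun x : ℕ+ => (x : ℕ)) n
  let e : (ℕ+ × Fin r) ⊕ ℕ+ ≃ ℕ+ × Fin (r + 1) :=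
    ((Equiv.sumCongr (Equiv.refl _) (Equiv.prodUnique ℕ+ (Fin 1)).symm).trans
      (Equiv.prodSumDistrib _ _ _).symm).trans (Equiv.prodCongr (Equiv.refl _) finSumFinEquiv)
  obtain ⟨b⟩ := cp_equiv e (Sum.elim (fun x : ℕ+ × Fin r => (x.1 : ℕ)) (fun x : ℕ+ => (x : ℕ)))
    (fun x => (x.1 : ℕ)) (by rintro (⟨x, y⟩ | x) <;> simp [e]) n
  exact ⟨b.symm.trans a⟩

theorem cp_finite1 (n : ℕ) : Finite (CpSet (fun x : ℕ+ => (x : ℕ)) n) := by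
  obtain ⟨e⟩ := cp_one n
  exact Finite.of_equiv _ e.symm

theorem cp_zero_iff (n : ℕ) (f : ℕ+ × Fin 0 →₀ ℕ) :
    (f.sum fun x m => (x.1 : ℕ) * m) = n ↔ n = 0 := by
  rw [Subsingleton.elim f 0, Finsupp.sum_zero_index, eq_comm]

theorem cp_finite (r n : ℕ) : Finite (CpSet (fun x : ℕ+ × Fin r => (x.1 : ℕ)) n) := by
  induction r generalizing n with
  | zero => unfold CpSet; infer_instance
  | succ r ih =>
    obtain ⟨e⟩ := cp_step r n
    have := cp_finite1
    exact Finite.of_equiv _ e.symm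

open PowerSeries in
/-- generating function mod 7 -/
noncomputable def cpGen (r : ℕ) : (ZMod 7)⟦X⟧ := PowerSeries.mk fun n => (colouredPartitions r n : ZMod 7)

open PowerSeries in
/-- partition generating function mod 7 -/
noncomputable def cpP : (ZMod 7)⟦X⟧ := PowerSeries.mk fun n => (Fintype.card n.Partition : ZMod 7)

theorem cpGen_succ (r : ℕ) : cpGen (r + 1) = cpGen r * cpP := by
  ext n
  rw [PowerSeries.coeff_mul]
  simp only [cpGen, cpP, PowerSeries.coeff_mk]
  obtain ⟨e⟩ := cp_step r n
  have f1 := cp_finite1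
  have f2 := cp_finite r
  have h : colouredPartitions (r + 1) n =
      ∑ p ∈ Finset.HasAntidiagonal.antidiagonal n, colouredPartitions r p.1 * Fintype.card p.2.Partition := by
    unfold colouredPartitions
    refine (Nat.card_congr e).trans ?_
    rw [Nat.card_sigma, ← Finset.sum_coe_sort (Finset.HasAntidiagonal.antidiagonal n)]
    refine Finset.sum_congr rfl fun p _ => ?_
    rw [Nat.card_prod]
    obtain ⟨e1⟩ := cp_one p.1.2
    rw [Nat.card_congr e1, Nat.card_eq_fintype_card (α := p.1.2.Partition)]
    rfl
  rw [h]
  push_cast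
  rfl

theorem cpGen_eq (r : ℕ) : cpGen r = cpP ^ r := by
  induction r with
  | zero =>
    ext n
    rw [pow_zero, PowerSeries.coeff_one]
    simp only [cpGen, PowerSeries.coeff_mk, colouredPartitions]
    simp only [cp_zero_iff]
    split_ifs with h
    · subst h
      simp
    · simp [h]
  | succ r ih => rw [cpGen_succ, ih, pow_succ]

open PowerSeries PowerSeries.WithPiTopology in
theorem cpP_mul : cpP * pentagonalSeries (ZMod 7) = 1 := by
  let : TopologicalSpace (ZMod 7) := ⊥
  have : DiscreteTopology (ZMod 7) := ⟨rfl⟩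
  have h1 := Nat.Partition.hasProd_powerSeriesMk_card_restricted (ZMod 7) (fun _ => True)
  have h2 := hasProd_one_sub_X_pow (ZMod 7)
  have h3 := h1.mul h2
  have e : cpP = PowerSeries.mk fun n ↦ ((Nat.Partition.restricted n (fun _ => True)).card : ZMod 7) := by
    ext n
    simp [cpP, Nat.Partition.restricted]
  rw [e]
  refine h3.unique ?_
  have h4 : ∀ i : ℕ, (if True then ∑' j : ℕ, (X : (ZMod 7)⟦X⟧) ^ ((i + 1) * j) else 1) *
      (1 - X ^ (i + 1)) = 1 := by
    intro i
    simp only [if_true, pow_mul]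
    exact tsum_pow_mul_one_sub_of_constantCoeff_eq_zero (by simp)
  rw [funext h4]
  exact hasProd_one

theorem colouredPartitions_cong_mod7_6 (k n j : ℕ) (hj : j = 3 ∨ j = 4 ∨ j = 6) :
    7 ∣ colouredPartitions (7 * k + 6) (7 * n + j) := by
  rw [← ZMod.natCast_eq_zero_iff]
  have h : cpGen (7 * k + 6) = PowerSeries.pentagonalSeries (ZMod 7) * (cpP ^ (k + 1)) ^ 7 := by
    rw [cpGen_eq, ← pow_mul, show (k + 1) * 7 = (7 * k + 6) + 1 by ring, pow_succ]
    linear_combination (-cpP ^ (7 * k + 6)) * cpP_mul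
  have h2 := congrArg (PowerSeries.coeff (7 * n + j)) h
  rw [PowerSeries.coeff_mul] at h2
  simp only [cpGen, PowerSeries.coeff_mk] at h2
  rw [h2]
  refine Finset.sum_eq_zero fun p hp => ?_
  rw [Finset.HasAntidiagonal.mem_antidiagonal] at hp
  by_cases hd : 7 ∣ p.2
  · rw [PowerSeries.coeff_pentagonalSeries_eq_zero, zero_mul]
    rintro ⟨m, hm⟩
    have := cp_pent_mod m _ hm
    omega
  · rw [cp_coeff_pow7 _ _ hd, mul_zero]
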